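/- Let A = (a_{ij}) ∈ ℝ^{N×N} be a nonzero skew-symmetric matrix, a := max_{i,j} |a_{ij}|, and t > 0. Let x_{ij}, 1 ≤ i < j ≤ N, be independent standard Gaussians, x_{ji} := x_{ij}, Y_A := (a_{ij} x_{ij}), and define log Φ̃(t,A) := E log det(√t I_N + Y_A). Then (1/N) log Φ̃(t,A) ≤ (1/N) log Φ(t,A) ≤ (1/N) log Φ̃(t,A) + (1/N) log( 1 + √(8N) a e^{a²N/(2t)} / √(πt) ), where Φ(t,A) is the weighted matching polynomial (times √t if N is odd). -/

import Mathlib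

/-!
Write `D(ξ) = det(√t I + Y_A(ξ))` and `L² = a² N / (2t)`.

*Expected determinant.* In the Leibniz expansion of `D`, a permutation that is not an involution
uses some Gaussian variable exactly once and has expectation zero. An involution contributes
`√t` per fixed point and `a_{ij}²` per transposed pair, the sign cancelling against
skew-symmetry; involutions correspond to matchings. Hence `E D = PhiFull A t`
(`integral_det`). Jensen's inequality gives the lower estimate.

*Lipschitz bound.* The derivative of `log D` in a skew direction `H` is `tr(B H)` with
`B = (√t I + Y_A)⁻¹`, and only the skew part of `B` matters. Since `B + Bᵀ = 2√t B Bᵀ`, one gets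
`‖B - Bᵀ‖² ≤ N / t` in the Frobenius norm, so that `log D` is `L`-Lipschitz in `ξ` for the
Euclidean distance (`log_det_lipschitz`).

*Concentration.* The Prékopa–Leindler inequality gives Maurey's property (τ) of the Gaussian
measure (`gaussian_tau`): if `F x * G y ≤ K exp(|x - y|² / 4)` for all `x, y`, then
`E F * E G ≤ K`. On the line this follows from one-dimensional Brunn–Minkowski and the
layer-cake formula, and it tensorizes by induction on the dimension. For `F = D`, `G = 1 / D` the
Lipschitz bound and `L r ≤ L² + r² / 4` allow `K = exp(L²)`, and Jensen's inequality for
`log (1 / D)` yields `log E D ≤ E log D + L²` (`log_bounds`).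

Finally `exp(L²) ≤ 1 + c exp(L²)` for `c = √(8N) a / √(πt)`, because `c² ≥ 4 L²`
(`exponent_le_log`).
-/

open MeasureTheory ProbabilityTheory Matrix

/-- Total weighted `k`-matching of the weighted graph encoded by the
skew-symmetric matrix `A`. -/
noncomputable def phiW {N : ℕ} (A : Matrix (Fin N) (Fin N) ℝ) (k : ℕ) : ℝ :=
  ∑ M ∈ Finset.univ.filter
      (fun M : Finset (Fin N × Fin N) =>
        ((∀ p ∈ M, p.1 < p.2) ∧
          ∀ p ∈ M, ∀ q ∈ M, p ≠ q →
            p.1 ≠ q.1 ∧ p.1 ≠ q.2 ∧ p.2 ≠ q.1 ∧ p.2 ≠ q.2) ∧ M.card = k),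
    ∏ p ∈ M, (A p.1 p.2) ^ 2

/-- The weighted matching polynomial `Φ(t, A)`. -/
noncomputable def PhiW {N : ℕ} (A : Matrix (Fin N) (Fin N) ℝ) (t : ℝ) : ℝ :=
  ∑ k ∈ Finset.range (N / 2 + 1), phiW A k * t ^ (N / 2 - k)

/-- `Φ(t,A)`, multiplied by `√t` when `N` is odd. -/
noncomputable def PhiFull {N : ℕ} (A : Matrix (Fin N) (Fin N) ℝ) (t : ℝ) : ℝ :=
  (if Even N then 1 else Real.sqrt t) * PhiW A t

/-- Index type of the strictly upper-triangular positions. -/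
abbrev PairIdx (N : ℕ) := {p : Fin N × Fin N // p.1 < p.2}

/-- The canonical product of standard Gaussian measures, one for each edge slot. -/
noncomputable def gaussPi (N : ℕ) : Measure (PairIdx N → ℝ) :=
  Measure.pi fun _ => gaussianReal 0 1

/-- The sample `Y_A(ξ)` of the random skew-symmetric matrix `Y_A`. -/
noncomputable def sampleY {N : ℕ} (A : Matrix (Fin N) (Fin N) ℝ)
    (ξ : PairIdx N → ℝ) : Matrix (Fin N) (Fin N) ℝ :=
  Matrix.of fun i j =>
    if h : i < j then A i j * ξ ⟨(i, j), h⟩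
    else if h : j < i then A i j * ξ ⟨(j, i), h⟩
    else 0

/-- `log Φ̃(t, A) = E log det(√t I_N + Y_A)` for i.i.d. standard Gaussian entries. -/
noncomputable def logPhiTilde {N : ℕ} (t : ℝ) (A : Matrix (Fin N) (Fin N) ℝ) : ℝ :=
  ∫ ξ, Real.log ((Real.sqrt t • (1 : Matrix (Fin N) (Fin N) ℝ) + sampleY A ξ).det) ∂(gaussPi N)

/-- The constant `C₁ = -(1/√(2π)) ∫ log(x²) e^{-x²/2} dx`. -/
noncomputable def C1 : ℝ :=
  -(Real.sqrt (2 * Real.pi))⁻¹ * ∫ x : ℝ, Real.log (x ^ 2) * Real.exp (-x ^ 2 / 2)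

open scoped ENNReal NNReal

/-! ### Prékopa–Leindler on the line and its Gaussian form -/

lemma volume_add_le_of_isCompact {A B C : Set ℝ} (hA : IsCompact A) (hB : IsCompact B)
    (hA' : A.Nonempty) (hB' : B.Nonempty)
    (hC : ∀ x ∈ A, ∀ y ∈ B, (x + y) / 2 ∈ C) :
    volume A + volume B ≤ 2 * volume C := by
  have h1 : sSup A ∈ A := hA.sSup_mem hA'
  have h2 : sInf B ∈ B := hB.sInf_mem hB'
  set s := sSup A with hs
  set i := sInf B with hi
  have hD : volume ((fun z : ℝ => (2⁻¹ : ℝ) * z) ⁻¹' C) = 2 * volume C := by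
    rw [Real.volume_preimage_mul_left (by norm_num)]
    simp
  -- The translates `A + min B` and `max A + B` meet in at most one point.
  set T1 := (fun x : ℝ => x + i) '' A
  set T2 := (fun x : ℝ => s + x) '' B
  have hT1 : volume T1 = volume A := by simp [T1]
  have hT2 : volume T2 = volume B := by simp [T2]
  have hm2 : MeasurableSet T2 := (hB.image (by fun_prop)).measurableSet
  have hdisj : AEDisjoint volume T1 T2 := by
    refine measure_mono_null (t := {s + i}) ?_ (by simp)
    rintro z ⟨⟨x, hx, rfl⟩, ⟨y, hy, hxy⟩⟩
    have e1 : x ≤ s := le_csSup hA.bddAbove hx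
    have e2 : i ≤ y := csInf_le hB.bddBelow hy
    simp only at hxy ⊢
    simp only [Set.mem_singleton_iff]
    linarith
  rw [← hT1, ← hT2, ← measure_union₀ hm2.nullMeasurableSet hdisj, ← hD]
  apply measure_mono
  rintro z (⟨x, hx, rfl⟩ | ⟨y, hy, rfl⟩)
  · have := hC x hx i h2
    simp only [Set.mem_preimage]
    convert this using 1; ring
  · have := hC s h1 y hy
    simp only [Set.mem_preimage]
    convert this using 1; ring

/-- The one-dimensional Brunn–Minkowski inequality, in midpoint form. -/
lemma volume_add_le {A B C : Set ℝ} (hA : MeasurableSet A) (hB : MeasurableSet B)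
    (hA' : A.Nonempty) (hB' : B.Nonempty)
    (hC : ∀ x ∈ A, ∀ y ∈ B, (x + y) / 2 ∈ C) :
    volume A + volume B ≤ 2 * volume C := by
  obtain ⟨p, hp⟩ := hA'
  obtain ⟨q, hq⟩ := hB'
  rw [hA.measure_eq_iSup_isCompact, hB.measure_eq_iSup_isCompact]
  simp only [iSup_and']
  refine ENNReal.biSup_add_biSup_le' ⟨∅, by simp⟩ ⟨∅, by simp⟩ ?_
  rintro K ⟨hKA, hK⟩ L ⟨hLB, hL⟩
  refine le_trans (add_le_add (measure_mono (Set.subset_insert p K))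
    (measure_mono (Set.subset_insert q L)))
    (volume_add_le_of_isCompact (hK.insert p) (hL.insert q) (by simp) (by simp) ?_)
  intro x hx y hy
  exact hC x (Set.insert_subset hp hKA hx) y (Set.insert_subset hq hLB hy)

/-- Additive Prékopa–Leindler inequality for functions normalized to have supremum `1`. -/
lemma lintegral_add_le_of_normalized {f g k : ℝ → ℝ} (hf : Measurable f) (hg : Measurable g)
    (hk : Measurable k) (f0 : ∀ x, 0 ≤ f x) (g0 : ∀ x, 0 ≤ g x) (k0 : ∀ x, 0 ≤ k x)
    (f1 : ∀ x, f x ≤ 1) (g1 : ∀ x, g x ≤ 1)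
    (fs : ∀ τ < 1, ∃ x, τ < f x) (gs : ∀ τ < 1, ∃ x, τ < g x)
    (h : ∀ x y, f x * g y ≤ k ((x + y) / 2) ^ 2) :
    (∫⁻ x, ENNReal.ofReal (f x)) + (∫⁻ x, ENNReal.ofReal (g x)) ≤
      2 * ∫⁻ x, ENNReal.ofReal (k x) := by
  have hmeas : ∀ φ : ℝ → ℝ, Measurable fun t : ℝ => volume {a : ℝ | t < φ a} := fun φ =>
    Antitone.measurable fun s t hst => measure_mono fun x (hx : t < φ x) => lt_of_le_of_lt hst hx
  rw [lintegral_eq_lintegral_meas_lt _ (ae_of_all _ f0) hf.aemeasurable,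
    lintegral_eq_lintegral_meas_lt _ (ae_of_all _ g0) hg.aemeasurable,
    lintegral_eq_lintegral_meas_lt _ (ae_of_all _ k0) hk.aemeasurable,
    ← lintegral_add_left (hmeas f), ← lintegral_const_mul _ (hmeas k)]
  refine setLIntegral_mono ((hmeas k).const_mul _) fun τ hτ => ?_
  rcases lt_or_ge τ 1 with h1 | h1
  · refine volume_add_le (hf measurableSet_Ioi) (hg measurableSet_Ioi) (fs τ h1) (gs τ h1) ?_
    intro x hx y hy
    have hx' : τ < f x := hx
    have hy' : τ < g y := hy
    have hτ' : 0 < τ := hτ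
    have : τ ^ 2 < k ((x + y) / 2) ^ 2 := by
      refine lt_of_lt_of_le ?_ (h x y)
      nlinarith
    exact lt_of_pow_lt_pow_left₀ 2 (k0 _) this
  · have e1 : {a | τ < f a} = ∅ := by
      ext x; simpa using (f1 x).trans h1
    have e2 : {a | τ < g a} = ∅ := by
      ext x; simpa using (g1 x).trans h1
    simp [e1, e2]

lemma four_mul_le_sq_ennreal (x y : ℝ≥0∞) : 4 * (x * y) ≤ (x + y) ^ 2 := by
  induction x with
  | top => simp
  | coe x =>
    induction y with
    | top => simp
    | coe y =>
      norm_cast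
      rw [← NNReal.coe_le_coe]
      push_cast
      nlinarith [sq_nonneg ((x : ℝ) - y)]

/-- The Prékopa–Leindler inequality on the line (midpoint case, bounded majorant). -/
lemma prekopa_leindler_line {u v : ℝ → ℝ≥0∞} {w : ℝ → ℝ} (hu : Measurable u) (hv : Measurable v)
    (hw : Measurable w) (w0 : ∀ x, 0 ≤ w x) (W : ℝ) (hW : ∀ x, w x ≤ W)
    (h : ∀ x y, u x * v y ≤ ENNReal.ofReal (w ((x + y) / 2) ^ 2)) :
    (∫⁻ x, u x) * (∫⁻ x, v x) ≤ (∫⁻ x, ENNReal.ofReal (w x)) ^ 2 := by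
  by_cases hu0 : ∀ x, u x = 0
  · simp [hu0]
  by_cases hv0 : ∀ x, v x = 0
  · simp [hv0]
  push Not at hu0 hv0
  obtain ⟨x0, hx0⟩ := hu0
  obtain ⟨y0, hy0⟩ := hv0
  have hb : ∀ x y, u x * v y ≤ ENNReal.ofReal (W ^ 2) := fun x y =>
    (h x y).trans (ENNReal.ofReal_le_ofReal (pow_le_pow_left₀ (w0 _) (hW _) 2))
  set P := ⨆ x, u x with hP
  set Q := ⨆ x, v x with hQ
  have hPQ : P * Q ≤ ENNReal.ofReal (W ^ 2) := by
    rw [hP, hQ, ENNReal.iSup_mul]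
    refine iSup_le fun x => ?_
    rw [ENNReal.mul_iSup]
    exact iSup_le fun y => hb x y
  have hP0 : P ≠ 0 := fun e => hx0 (le_antisymm (e ▸ le_iSup u x0) bot_le)
  have hQ0 : Q ≠ 0 := fun e => hy0 (le_antisymm (e ▸ le_iSup v y0) bot_le)
  have hPt : P ≠ ⊤ := by
    intro e
    rw [e, ENNReal.top_mul hQ0] at hPQ
    simp at hPQ
  have hQt : Q ≠ ⊤ := by
    intro e
    rw [e, ENNReal.mul_top hP0] at hPQ
    simp at hPQ
  have hut : ∀ x, u x ≠ ⊤ := fun x => ne_top_of_le_ne_top hPt (le_iSup u x)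
  have hvt : ∀ x, v x ≠ ⊤ := fun x => ne_top_of_le_ne_top hQt (le_iSup v x)
  have hp : 0 < P.toReal := ENNReal.toReal_pos hP0 hPt
  have hq : 0 < Q.toReal := ENNReal.toReal_pos hQ0 hQt
  set p := P.toReal
  set q := Q.toReal
  have hpq : 0 < √(p * q) := Real.sqrt_pos.2 (by positivity)
  have key := lintegral_add_le_of_normalized (f := fun x => (u x).toReal / p)
    (g := fun x => (v x).toReal / q) (k := fun x => w x / √(p * q))
    (by fun_prop) (by fun_prop) (by fun_prop) (fun x => by positivity) (fun x => by positivity)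
    (fun x => div_nonneg (w0 x) hpq.le)
    (fun x => by
      rw [div_le_one hp]
      exact ENNReal.toReal_mono hPt (le_iSup u x))
    (fun x => by
      rw [div_le_one hq]
      exact ENNReal.toReal_mono hQt (le_iSup v x))
    (fun τ hτ => by
      have : ENNReal.ofReal (τ * p) < ⨆ x, u x := by
        rw [← hP, ← ENNReal.ofReal_toReal hPt, ENNReal.ofReal_lt_ofReal_iff hp]
        exact (mul_lt_iff_lt_one_left hp).2 hτ
      obtain ⟨x, hx⟩ := lt_iSup_iff.1 this
      refine ⟨x, ?_⟩
      rw [lt_div_iff₀ hp]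
      by_contra hcon
      push Not at hcon
      have := ENNReal.ofReal_le_ofReal hcon
      rw [ENNReal.ofReal_toReal (hut x)] at this
      exact absurd hx (not_lt.2 this))
    (fun τ hτ => by
      have : ENNReal.ofReal (τ * q) < ⨆ x, v x := by
        rw [← hQ, ← ENNReal.ofReal_toReal hQt, ENNReal.ofReal_lt_ofReal_iff hq]
        exact (mul_lt_iff_lt_one_left hq).2 hτ
      obtain ⟨x, hx⟩ := lt_iSup_iff.1 this
      refine ⟨x, ?_⟩
      rw [lt_div_iff₀ hq]
      by_contra hcon
      push Not at hcon
      have := ENNReal.ofReal_le_ofReal hcon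
      rw [ENNReal.ofReal_toReal (hvt x)] at this
      exact absurd hx (not_lt.2 this))
    (fun x y => by
      have h1 := ENNReal.toReal_mono ENNReal.ofReal_ne_top (h x y)
      rw [ENNReal.toReal_mul, ENNReal.toReal_ofReal (sq_nonneg _)] at h1
      rw [div_pow, Real.sq_sqrt (by positivity), div_mul_div_comm]
      gcongr)
  have conv : ∀ (φ : ℝ → ℝ) (c : ℝ), Measurable φ → 0 < c →
      ∫⁻ x, ENNReal.ofReal (φ x / c) = (∫⁻ x, ENNReal.ofReal (φ x)) / ENNReal.ofReal c := by
    intro φ c hφ hc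
    simp_rw [ENNReal.ofReal_div_of_pos hc, div_eq_mul_inv]
    rw [lintegral_mul_const _ hφ.ennreal_ofReal]
  rw [conv _ _ (by fun_prop) hp, conv _ _ (by fun_prop) hq, conv _ _ hw hpq] at key
  simp_rw [ENNReal.ofReal_toReal (hut _), ENNReal.ofReal_toReal (hvt _)] at key
  have k2 := (four_mul_le_sq_ennreal _ _).trans (pow_le_pow_left' key 2)
  set U := ∫⁻ x, u x
  set V := ∫⁻ x, v x
  set Z := ∫⁻ x, ENNReal.ofReal (w x)
  have e : ENNReal.ofReal √(p * q) ^ 2 = ENNReal.ofReal p * ENNReal.ofReal q := by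
    rw [← ENNReal.ofReal_pow (by positivity), Real.sq_sqrt (by positivity),
      ENNReal.ofReal_mul hp.le]
  have hc0 : ENNReal.ofReal p * ENNReal.ofReal q ≠ 0 := by
    simp [hp, hq]
  have hct : ENNReal.ofReal p * ENNReal.ofReal q ≠ ⊤ :=
    ENNReal.mul_ne_top ENNReal.ofReal_ne_top ENNReal.ofReal_ne_top
  have e1 : 4 * (U / ENNReal.ofReal p * (V / ENNReal.ofReal q)) =
      (4 / (ENNReal.ofReal p * ENNReal.ofReal q)) * (U * V) := by
    rw [div_eq_mul_inv, div_eq_mul_inv, div_eq_mul_inv, ENNReal.mul_inv (by simp) (by simp)]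
    ring
  have e2 : (2 * (Z / ENNReal.ofReal √(p * q))) ^ 2 =
      (4 / (ENNReal.ofReal p * ENNReal.ofReal q)) * Z ^ 2 := by
    rw [← e, div_eq_mul_inv, div_eq_mul_inv, ENNReal.inv_pow]
    ring
  rw [e1, e2] at k2
  exact (ENNReal.mul_le_mul_iff_right (by simp [ENNReal.div_eq_zero_iff, hct])
    (by simp [ENNReal.div_eq_top, hp, hq])).1 k2

/-- Prékopa–Leindler for the standard Gaussian: the density absorbs the factor
`exp ((x - y) ^ 2 / 4)`. -/
lemma gaussian_tau_line {F G : ℝ → ℝ≥0∞} (hF : Measurable F) (hG : Measurable G) (K : ℝ)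
    (hK : 0 ≤ K)
    (h : ∀ x y, F x * G y ≤ ENNReal.ofReal (K * Real.exp ((x - y) ^ 2 / 4))) :
    (∫⁻ x, F x ∂gaussianReal 0 1) * (∫⁻ x, G x ∂gaussianReal 0 1) ≤ ENNReal.ofReal K := by
  rw [gaussianReal_of_var_ne_zero 0 one_ne_zero,
    lintegral_withDensity_eq_lintegral_mul _ (measurable_gaussianPDF 0 1) hF,
    lintegral_withDensity_eq_lintegral_mul _ (measurable_gaussianPDF 0 1) hG]
  have key := prekopa_leindler_line (u := gaussianPDF 0 1 * F) (v := gaussianPDF 0 1 * G)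
    (w := fun x => √K * gaussianPDFReal 0 1 x)
    ((measurable_gaussianPDF 0 1).mul hF) ((measurable_gaussianPDF 0 1).mul hG)
    ((measurable_gaussianPDFReal 0 1).const_mul _)
    (fun x => mul_nonneg (Real.sqrt_nonneg _) (gaussianPDFReal_nonneg 0 1 x))
    (√K * (√(2 * Real.pi))⁻¹)
    (fun x => by
      gcongr
      simp only [gaussianPDFReal, NNReal.coe_one, mul_one, sub_zero]
      refine mul_le_of_le_one_right (by positivity) (Real.exp_le_one_iff.2 ?_)
      have := sq_nonneg x
      linarith)
    (fun x y => by
      simp only [Pi.mul_apply]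
      calc gaussianPDF 0 1 x * F x * (gaussianPDF 0 1 y * G y)
          = ENNReal.ofReal (gaussianPDFReal 0 1 x * gaussianPDFReal 0 1 y) * (F x * G y) := by
            rw [ENNReal.ofReal_mul (gaussianPDFReal_nonneg 0 1 x)]
            simp only [gaussianPDF]
            ring
        _ ≤ ENNReal.ofReal (gaussianPDFReal 0 1 x * gaussianPDFReal 0 1 y) *
            ENNReal.ofReal (K * Real.exp ((x - y) ^ 2 / 4)) := by
            gcongr
            exact h x y
        _ = _ := by
            rw [← ENNReal.ofReal_mul (mul_nonneg (gaussianPDFReal_nonneg 0 1 x)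
              (gaussianPDFReal_nonneg 0 1 y))]
            congr 1
            simp only [gaussianPDFReal, NNReal.coe_one, mul_one, sub_zero]
            rw [mul_pow, Real.sq_sqrt hK, mul_pow, ← Real.exp_nat_mul]
            have : Real.exp (-x ^ 2 / 2) * Real.exp (-y ^ 2 / 2) * Real.exp ((x - y) ^ 2 / 4)
                = Real.exp ((2 : ℕ) * (-((x + y) / 2) ^ 2 / 2)) := by
              rw [← Real.exp_add, ← Real.exp_add]
              congr 1
              push_cast
              ring
            rw [← this]
            ring)
  refine key.trans (le_of_eq ?_)
  simp_rw [ENNReal.ofReal_mul (Real.sqrt_nonneg K)]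
  rw [lintegral_const_mul _ (measurable_gaussianPDFReal 0 1).ennreal_ofReal,
    lintegral_gaussianPDFReal_eq_one 0 one_ne_zero, mul_one,
    ← ENNReal.ofReal_pow (Real.sqrt_nonneg K), Real.sq_sqrt hK]

/-- Tensorization of the Gaussian inequality: integrating out one coordinate preserves the
hypothesis, so induction on the dimension applies. -/
lemma gaussian_tau_fin (n : ℕ) {F G : (Fin n → ℝ) → ℝ≥0∞} (hF : Measurable F) (hG : Measurable G)
    (K : ℝ) (hK : 0 ≤ K)
    (h : ∀ x y, F x * G y ≤ ENNReal.ofReal (K * Real.exp ((∑ i, (x i - y i) ^ 2) / 4))) :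
    (∫⁻ x, F x ∂Measure.pi fun _ => gaussianReal 0 1) *
      (∫⁻ x, G x ∂Measure.pi fun _ => gaussianReal 0 1) ≤ ENNReal.ofReal K := by
  induction n generalizing K with
  | zero =>
    have := h default default
    simp only [Finset.univ_eq_empty, Finset.sum_empty, zero_div, Real.exp_zero, mul_one] at this
    rw [lintegral_unique, lintegral_unique, measure_univ, mul_one, mul_one]
    convert this
  | succ n ih =>
    have mp := (measurePreserving_piFinSuccAbove (n := n) (α := fun _ => ℝ)
      (fun _ => gaussianReal 0 1) 0).symm
    rw [← mp.lintegral_comp hF, ← mp.lintegral_comp hG]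
    have hF' : Measurable fun a =>
      F ((MeasurableEquiv.piFinSuccAbove (fun _ => ℝ) 0).symm a) := hF.comp mp.measurable
    have hG' : Measurable fun a =>
      G ((MeasurableEquiv.piFinSuccAbove (fun _ => ℝ) 0).symm a) := hG.comp mp.measurable
    rw [lintegral_prod _ hF'.aemeasurable, lintegral_prod _ hG'.aemeasurable]
    refine gaussian_tau_line hF'.lintegral_prod_right' hG'.lintegral_prod_right' K hK ?_
    intro s r
    refine ih (hF'.comp measurable_prodMk_left) (hG'.comp measurable_prodMk_left) _
      (by positivity) ?_
    intro x y
    refine (h _ _).trans (le_of_eq ?_)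
    congr 1
    rw [mul_assoc, ← Real.exp_add, Fin.sum_univ_succ, add_div]
    simp [MeasurableEquiv.piFinSuccAbove]

lemma gaussian_tau {ι : Type} [Fintype ι] {F G : (ι → ℝ) → ℝ≥0∞}
    (hF : Measurable F) (hG : Measurable G) (K : ℝ) (hK : 0 ≤ K)
    (h : ∀ x y, F x * G y ≤ ENNReal.ofReal (K * Real.exp ((∑ i, (x i - y i) ^ 2) / 4))) :
    (∫⁻ x, F x ∂Measure.pi fun _ => gaussianReal 0 1) *
      (∫⁻ x, G x ∂Measure.pi fun _ => gaussianReal 0 1) ≤ ENNReal.ofReal K := by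
  have mp := measurePreserving_piCongrLeft (α := fun _ : ι => ℝ) (fun _ => gaussianReal 0 1)
    (Fintype.equivFin ι).symm
  rw [← mp.lintegral_comp hF, ← mp.lintegral_comp hG]
  refine gaussian_tau_fin _ (hF.comp mp.measurable) (hG.comp mp.measurable) K hK ?_
  intro x y
  refine (h _ _).trans (le_of_eq ?_)
  congr 4
  rw [← (Fintype.equivFin ι).symm.sum_comp]
  simp [MeasurableEquiv.coe_piCongrLeft]

/-! ### Sums and products over pairs of indices -/

/-- Splitting of a product over all ordered pairs into the diagonal and the unordered pairs. -/
@[to_additive]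
lemma prod_pairs {N : ℕ} {M : Type*} [CommMonoid M] (f : Fin N → Fin N → M) :
    ∏ i, ∏ j, f i j = (∏ i, f i i) * ∏ p : PairIdx N, (f p.1.1 p.1.2 * f p.1.2 p.1.1) := by
  have h3 : ∀ i j : Fin N, f i j = (if i < j then f i j else 1) * (if j < i then f i j else 1) *
      (if i = j then f i i else 1) := by
    intro i j
    rcases lt_trichotomy i j with h | h | h
    · simp [h, h.not_gt, h.ne]
    · simp [h]
    · simp [h, h.not_gt, h.ne']
  have h4 : ∀ g : Fin N → Fin N → M,
      ∏ p : PairIdx N, g p.1.1 p.1.2 = ∏ i, ∏ j, if i < j then g i j else 1 := by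
    intro g
    rw [← Fintype.prod_prod_type' (f := fun i j => if i < j then g i j else 1),
      ← Finset.prod_filter, Finset.prod_subtype (p := fun p : Fin N × Fin N => p.1 < p.2)]
    simp
  rw [Finset.prod_mul_distrib, h4, h4 (fun i j => f j i)]
  conv_lhs => enter [2, i, 2, j]; rw [h3]
  simp only [Finset.prod_mul_distrib]
  rw [Finset.prod_comm (f := fun i j => if j < i then f i j else 1), mul_comm]
  congr 1
  refine Finset.prod_congr rfl fun i _ => ?_
  simp

/-! ### The determinant of a shifted skew-symmetric matrix -/

section Skew

variable {N : ℕ} {Y : Matrix (Fin N) (Fin N) ℝ} {t : ℝ}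

lemma dotProduct_mulVec_skew (hY : Yᵀ = -Y) (v : Fin N → ℝ) : v ⬝ᵥ (Y *ᵥ v) = 0 := by
  have h : v ⬝ᵥ (Y *ᵥ v) = v ⬝ᵥ (Yᵀ *ᵥ v) := by
    rw [Matrix.mulVec_transpose, dotProduct_comm v (v ᵥ* Y), ← Matrix.dotProduct_mulVec]
  rw [hY, Matrix.neg_mulVec, dotProduct_neg] at h
  linarith

lemma det_shift_ne_zero (hY : Yᵀ = -Y) (ht : 0 < t) :
    (√t • (1 : Matrix (Fin N) (Fin N) ℝ) + Y).det ≠ 0 := by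
  intro h
  obtain ⟨v, hv, hv'⟩ := Matrix.exists_mulVec_eq_zero_iff.2 h
  have h1 : v ⬝ᵥ ((√t • (1 : Matrix (Fin N) (Fin N) ℝ) + Y) *ᵥ v) = √t * (v ⬝ᵥ v) := by
    rw [Matrix.add_mulVec, dotProduct_add, dotProduct_mulVec_skew hY, Matrix.smul_mulVec,
      Matrix.one_mulVec, dotProduct_smul, add_zero, smul_eq_mul]
  rw [hv', dotProduct_zero] at h1
  have h2 : v ⬝ᵥ v = 0 := by
    rcases mul_eq_zero.1 h1.symm with h | h
    · exact absurd h (Real.sqrt_pos.2 ht).ne'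
    · exact h
  exact hv (dotProduct_self_eq_zero.1 h2)

/-- `s ↦ det (√t I + s Y)` never vanishes and is positive at `s = 0`. -/
lemma det_shift_pos (hY : Yᵀ = -Y) (ht : 0 < t) :
    0 < (√t • (1 : Matrix (Fin N) (Fin N) ℝ) + Y).det := by
  by_contra hcon
  push Not at hcon
  set g : ℝ → ℝ := fun s => (√t • (1 : Matrix (Fin N) (Fin N) ℝ) + s • Y).det with hg
  have hc : Continuous g := by
    refine Continuous.matrix_det ?_
    fun_prop
  have h0 : 0 ≤ g 0 := by
    simp only [hg, zero_smul, add_zero, Matrix.det_smul, Matrix.det_one, mul_one]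
    positivity
  have h1 : g 1 ≤ 0 := by simpa [hg] using hcon
  obtain ⟨s, -, hs⟩ := intermediate_value_Icc' (zero_le_one) hc.continuousOn ⟨h1, h0⟩
  exact det_shift_ne_zero (Y := s • Y) (by rw [Matrix.transpose_smul, hY, smul_neg]) ht hs

lemma trace_mul_transpose_nonneg (X : Matrix (Fin N) (Fin N) ℝ) : 0 ≤ (X * Xᵀ).trace := by
  simp only [Matrix.trace, Matrix.diag, Matrix.mul_apply, Matrix.transpose_apply]
  exact Finset.sum_nonneg fun i _ => Finset.sum_nonneg fun j _ => mul_self_nonneg _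

lemma trace_mul_transpose_eq (X : Matrix (Fin N) (Fin N) ℝ) :
    (X * Xᵀ).trace = ∑ i, ∑ j, X i j ^ 2 := by
  simp only [Matrix.trace, Matrix.diag, Matrix.mul_apply, Matrix.transpose_apply, sq]

/-- With `B = (√t I + Y)⁻¹` and `S = B + Bᵀ = 2√t B Bᵀ`, one has
`‖B - Bᵀ‖² = N / t - ‖S - I / √t‖²` in the Frobenius norm. -/
lemma frobenius_skew_inv_le (hY : Yᵀ = -Y) (ht : 0 < t) :
    let B := (√t • (1 : Matrix (Fin N) (Fin N) ℝ) + Y)⁻¹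
    ∑ i, ∑ j, (B - Bᵀ) i j ^ 2 ≤ N / t := by
  intro B
  have hu : IsUnit (√t • (1 : Matrix (Fin N) (Fin N) ℝ) + Y).det :=
    (det_shift_ne_zero hY ht).isUnit
  have hs : 0 < √t := Real.sqrt_pos.2 ht
  have hBM : B * (√t • (1 : Matrix (Fin N) (Fin N) ℝ) + Y) = 1 := Matrix.nonsing_inv_mul _ hu
  have hMB : (√t • (1 : Matrix (Fin N) (Fin N) ℝ) + Y)ᵀ * Bᵀ = 1 := by
    rw [← Matrix.transpose_mul, hBM, Matrix.transpose_one]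
  have hS : B + Bᵀ = (2 * √t) • (B * Bᵀ) := by
    have h1 : B * ((√t • (1 : Matrix (Fin N) (Fin N) ℝ) + Y) +
        (√t • (1 : Matrix (Fin N) (Fin N) ℝ) + Y)ᵀ) * Bᵀ = Bᵀ + B := by
      rw [mul_add, hBM, add_mul, one_mul, mul_assoc, hMB, mul_one]
    have h2 : (√t • (1 : Matrix (Fin N) (Fin N) ℝ) + Y) +
        (√t • (1 : Matrix (Fin N) (Fin N) ℝ) + Y)ᵀ = (2 * √t) • 1 := by
      rw [Matrix.transpose_add, hY, Matrix.transpose_smul, Matrix.transpose_one]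
      module
    rw [add_comm, ← h1, h2]
    simp
  have hX := trace_mul_transpose_nonneg ((B + Bᵀ) - (√t)⁻¹ • (1 : Matrix (Fin N) (Fin N) ℝ))
  have e1 : ((B + Bᵀ) - (√t)⁻¹ • (1 : Matrix (Fin N) (Fin N) ℝ)) *
      ((B + Bᵀ) - (√t)⁻¹ • (1 : Matrix (Fin N) (Fin N) ℝ))ᵀ =
      (B + Bᵀ) * (B + Bᵀ)ᵀ - (2 * (√t)⁻¹) • (B + Bᵀ) + ((√t)⁻¹ ^ 2) • 1 := by
    simp only [Matrix.transpose_sub, Matrix.transpose_add, Matrix.transpose_transpose,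
      Matrix.transpose_smul, Matrix.transpose_one, sub_mul, mul_sub, add_mul, mul_add,
      smul_mul_assoc, mul_smul_comm, one_mul, mul_one]
    module
  have e2 : (B + Bᵀ) * (B + Bᵀ)ᵀ + (B - Bᵀ) * (B - Bᵀ)ᵀ = (2 : ℝ) • (B * Bᵀ + Bᵀ * B) := by
    simp only [Matrix.transpose_sub, Matrix.transpose_add, Matrix.transpose_transpose,
      sub_mul, mul_sub, add_mul, mul_add]
    module
  have e3 := congrArg Matrix.trace e2
  rw [Matrix.trace_add, Matrix.trace_smul, Matrix.trace_add, Matrix.trace_mul_comm Bᵀ B] at e3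
  rw [e1, Matrix.trace_add, Matrix.trace_sub, Matrix.trace_smul, Matrix.trace_smul, hS,
    Matrix.trace_smul, Matrix.trace_one, Fintype.card_fin, ← hS] at hX
  rw [← trace_mul_transpose_eq]
  simp only [smul_eq_mul] at hX e3
  have e4 : (√t)⁻¹ ^ 2 * (N : ℝ) = N / t := by
    rw [inv_pow, Real.sq_sqrt ht.le]; field_simp
  have e5 : 2 * (√t)⁻¹ * (2 * √t * (B * Bᵀ).trace) = 4 * (B * Bᵀ).trace := by
    field_simp; ring
  rw [e4, e5] at hX
  linarith

lemma trace_inv_mul_sq_le (hY : Yᵀ = -Y) (ht : 0 < t) {D : Matrix (Fin N) (Fin N) ℝ}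
    (hD : Dᵀ = -D) :
    (((√t • (1 : Matrix (Fin N) (Fin N) ℝ) + Y)⁻¹ * D).trace) ^ 2 ≤
      N / (4 * t) * ∑ i, ∑ j, D i j ^ 2 := by
  have hB := frobenius_skew_inv_le hY ht
  set B := (√t • (1 : Matrix (Fin N) (Fin N) ℝ) + Y)⁻¹
  simp only at hB
  have h1 : (B * D).trace = 2⁻¹ * ((B - Bᵀ) * D).trace := by
    have : (Bᵀ * D).trace = - (B * D).trace := by
      rw [← Matrix.trace_transpose, Matrix.transpose_mul, hD, Matrix.transpose_transpose,
        neg_mul, Matrix.trace_neg, Matrix.trace_mul_comm]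
    rw [sub_mul, Matrix.trace_sub, this]
    ring
  have h2 : ((B - Bᵀ) * D).trace ^ 2 ≤
      (∑ i, ∑ j, (B - Bᵀ) i j ^ 2) * ∑ i, ∑ j, D i j ^ 2 := by
    have := Finset.sum_mul_sq_le_sq_mul_sq (Finset.univ : Finset (Fin N × Fin N))
      (fun p => (B - Bᵀ) p.1 p.2) (fun p => D p.2 p.1)
    simp only [Fintype.sum_prod_type] at this
    rw [Finset.sum_comm (f := fun i j => D j i ^ 2)] at this
    simpa only [Matrix.trace, Matrix.diag, Matrix.mul_apply] using this
  have h3 : 0 ≤ ∑ i, ∑ j, D i j ^ 2 :=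
    Finset.sum_nonneg fun i _ => Finset.sum_nonneg fun j _ => sq_nonneg _
  rw [h1, mul_pow]
  calc _ ≤ (2⁻¹ : ℝ) ^ 2 * ((N / t) * ∑ i, ∑ j, D i j ^ 2) := by
        gcongr
        exact h2.trans (mul_le_mul_of_nonneg_right hB h3)
    _ = _ := by ring

lemma hasDerivAt_log_det (M D : Matrix (Fin N) (Fin N) ℝ) (s : ℝ)
    (hM : (M + s • D).det ≠ 0) :
    HasDerivAt (fun r : ℝ => Real.log (M + r • D).det) ((M + s • D)⁻¹ * D).trace s := by
  set P := M + s • D with hP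
  have h1 : ∀ r : ℝ, (M + r • D).det = P.det * (1 + (r - s) • (P⁻¹ * D)).det := by
    intro r
    rw [← Matrix.det_mul, mul_add, mul_one, mul_smul_comm, ← mul_assoc,
      Matrix.mul_nonsing_inv _ hM.isUnit, one_mul, hP]
    congr 1
    module
  set T := (P⁻¹ * D).trace
  set q := (Matrix.det (1 + (Polynomial.X : Polynomial ℝ) • (P⁻¹ * D).map Polynomial.C)).divX.divX
  have h2 : (fun r : ℝ => (M + r • D).det) = fun r =>
      P.det * (1 + T * (r - s) + q.eval (r - s) * (r - s) ^ 2) := by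
    funext r
    rw [h1, Matrix.det_one_add_smul]
  have h3 : HasDerivAt (fun r : ℝ => (M + r • D).det) (P.det * T) s := by
    rw [h2]
    have hid : HasDerivAt (fun r : ℝ => r - s) 1 s := (hasDerivAt_id s).sub_const s
    have hq : HasDerivAt (fun r : ℝ => q.eval (r - s)) (q.derivative.eval (s - s) * 1) s :=
      HasDerivAt.comp (h₂ := fun r => q.eval r) s (q.hasDerivAt (s - s)) hid
    have := (((hid.const_mul T).const_add 1).add (hq.mul (hid.pow 2))).const_mul P.det
    refine HasDerivAt.congr_deriv this ?_
    simp
  have h4 := h3.log (by simpa [hP] using hM)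
  convert h4 using 1
  rw [← hP]
  field_simp

end Skew

/-! ### The sample matrix and the Lipschitz bound -/

section Sample

variable {N : ℕ} {A : Matrix (Fin N) (Fin N) ℝ} {a t : ℝ}

lemma sampleY_of_lt (ξ : PairIdx N → ℝ) {i j : Fin N} (h : i < j) :
    sampleY A ξ i j = A i j * ξ ⟨(i, j), h⟩ := by
  simp [sampleY, h]

lemma sampleY_of_gt (ξ : PairIdx N → ℝ) {i j : Fin N} (h : j < i) :
    sampleY A ξ i j = A i j * ξ ⟨(j, i), h⟩ := by
  simp [sampleY, h, h.not_gt]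

lemma sampleY_diag (ξ : PairIdx N → ℝ) (i : Fin N) : sampleY A ξ i i = 0 := by
  simp [sampleY]

lemma skew_apply (hA : Aᵀ = -A) (i j : Fin N) : A j i = - A i j := by
  simpa using congrFun (congrFun hA i) j

lemma sampleY_transpose (hA : Aᵀ = -A) (ξ : PairIdx N → ℝ) :
    (sampleY A ξ)ᵀ = - sampleY A ξ := by
  ext i j
  rw [Matrix.transpose_apply, Matrix.neg_apply]
  rcases lt_trichotomy i j with h | h | h
  · rw [sampleY_of_lt ξ h, sampleY_of_gt ξ h, skew_apply hA i j]; ring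
  · subst h; simp [sampleY_diag]
  · rw [sampleY_of_lt ξ h, sampleY_of_gt ξ h, skew_apply hA i j]; ring

lemma sampleY_add_smul (x h : PairIdx N → ℝ) (s : ℝ) :
    sampleY A (x + s • h) = sampleY A x + s • sampleY A h := by
  ext i j
  rw [Matrix.add_apply, Matrix.smul_apply]
  rcases lt_trichotomy i j with h | h | h
  · simp only [sampleY_of_lt _ h, Pi.add_apply, Pi.smul_apply, smul_eq_mul]; ring
  · subst h; simp [sampleY_diag]
  · simp only [sampleY_of_gt _ h, Pi.add_apply, Pi.smul_apply, smul_eq_mul]; ring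

lemma sum_sq_sampleY_le (ha : ∀ i j, |A i j| ≤ a) (h : PairIdx N → ℝ) :
    ∑ i, ∑ j, sampleY A h i j ^ 2 ≤ 2 * a ^ 2 * ∑ p, h p ^ 2 := by
  rw [sum_pairs]
  simp only [sampleY_diag]
  rw [Finset.mul_sum]
  simp only [ne_eq, OfNat.ofNat_ne_zero, not_false_eq_true, zero_pow, Finset.sum_const_zero,
    zero_add]
  refine Finset.sum_le_sum fun p _ => ?_
  rw [sampleY_of_lt h p.2, sampleY_of_gt h p.2, mul_pow, mul_pow]
  have h1 : ∀ i j, A i j ^ 2 ≤ a ^ 2 := fun i j => sq_le_sq' (abs_le.1 (ha i j)).1 (abs_le.1 (ha i j)).2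
  have := h1 p.1.1 p.1.2
  have := h1 p.1.2 p.1.1
  have : 0 ≤ h p ^ 2 := sq_nonneg _
  nlinarith

/-- `log det (√t I + Y_A)` is Lipschitz for the Euclidean distance, with constant
`√(a² N / (2t))`. -/
lemma log_det_lipschitz (hA : Aᵀ = -A) (ha : ∀ i j, |A i j| ≤ a) (ht : 0 < t)
    (x y : PairIdx N → ℝ) :
    |Real.log (√t • (1 : Matrix (Fin N) (Fin N) ℝ) + sampleY A x).det -
      Real.log (√t • (1 : Matrix (Fin N) (Fin N) ℝ) + sampleY A y).det| ≤
      √(a ^ 2 * N / (2 * t) * ∑ p, (x p - y p) ^ 2) := by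
  set M := √t • (1 : Matrix (Fin N) (Fin N) ℝ) + sampleY A y with hM
  set D := sampleY A (x - y) with hD
  have e : ∀ s : ℝ, M + s • D = √t • (1 : Matrix (Fin N) (Fin N) ℝ) + sampleY A (y + s • (x - y)) := by
    intro s
    rw [sampleY_add_smul, hM, hD, add_assoc]
  have hd : ∀ s : ℝ, HasDerivAt (fun r : ℝ => Real.log (M + r • D).det)
      ((M + s • D)⁻¹ * D).trace s := fun s =>
    hasDerivAt_log_det M D s (by rw [e]; exact det_shift_ne_zero (sampleY_transpose hA _) ht)
  have hb : ∀ s : ℝ, ‖((M + s • D)⁻¹ * D).trace‖ ≤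
      √(a ^ 2 * N / (2 * t) * ∑ p, (x p - y p) ^ 2) := by
    intro s
    rw [Real.norm_eq_abs]
    apply Real.abs_le_sqrt
    rw [e]
    refine (trace_inv_mul_sq_le (sampleY_transpose hA _) ht (sampleY_transpose hA _)).trans ?_
    refine (mul_le_mul_of_nonneg_left (sum_sq_sampleY_le ha _) (by positivity)).trans
      (le_of_eq ?_)
    simp only [Pi.sub_apply]
    field_simp
    ring
  have key := Convex.norm_image_sub_le_of_norm_hasDerivWithin_le (s := Set.univ)
    (fun s _ => (hd s).hasDerivWithinAt) (fun s _ => hb s) convex_univ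
    (Set.mem_univ (0 : ℝ)) (Set.mem_univ (1 : ℝ))
  have e1 : M + (1 : ℝ) • D = √t • (1 : Matrix (Fin N) (Fin N) ℝ) + sampleY A x := by
    rw [e]; simp
  rw [e1] at key
  simpa using key

end Sample

/-! ### The expected determinant -/

section Expectation

variable {N : ℕ} {A : Matrix (Fin N) (Fin N) ℝ} {t : ℝ}

lemma integrable_id_gauss : Integrable (fun x : ℝ => x) (gaussianReal 0 1) :=
  memLp_one_iff_integrable.1 (memLp_id_gaussianReal 1)

lemma integrable_sq_gauss : Integrable (fun x : ℝ => x ^ 2) (gaussianReal 0 1) :=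
  (memLp_id_gaussianReal 2).integrable_sq

lemma integral_sq_gauss : ∫ x : ℝ, x ^ 2 ∂gaussianReal 0 1 = 1 := by
  have h := variance_fun_id_gaussianReal (μ := 0) (v := 1)
  rw [variance_of_integral_eq_zero (by fun_prop) integral_id_gaussianReal] at h
  simpa using h

/-- The part of `∏ j, (√t I + Y_A) (σ j) j` that involves the Gaussian variable `x` attached to
the pair `p`. -/
noncomputable def pairFactor (A : Matrix (Fin N) (Fin N) ℝ) (σ : Equiv.Perm (Fin N))
    (p : PairIdx N) (x : ℝ) : ℝ :=
  (if σ p.1.2 = p.1.1 then A p.1.1 p.1.2 * x else 1) *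
    (if σ p.1.1 = p.1.2 then A p.1.2 p.1.1 * x else 1)

lemma pairFactor_integrable (σ : Equiv.Perm (Fin N)) (p : PairIdx N) :
    Integrable (pairFactor A σ p) (gaussianReal 0 1) := by
  unfold pairFactor
  split_ifs
  · refine (integrable_sq_gauss.const_mul (A p.1.1 p.1.2 * A p.1.2 p.1.1)).congr
      (ae_of_all _ fun x => ?_)
    simp only; ring
  · simpa using integrable_id_gauss.const_mul _
  · simpa using integrable_id_gauss.const_mul _
  · simp

lemma pairFactor_integral (hA : Aᵀ = -A) (σ : Equiv.Perm (Fin N)) (p : PairIdx N) :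
    ∫ x, pairFactor A σ p x ∂gaussianReal 0 1 =
      if σ p.1.2 = p.1.1 then (if σ p.1.1 = p.1.2 then - A p.1.1 p.1.2 ^ 2 else 0)
        else (if σ p.1.1 = p.1.2 then 0 else 1) := by
  unfold pairFactor
  split_ifs
  · have : ∀ x : ℝ, A p.1.1 p.1.2 * x * (A p.1.2 p.1.1 * x) = - A p.1.1 p.1.2 ^ 2 * x ^ 2 := by
      intro x; rw [skew_apply hA p.1.1 p.1.2]; ring
    simp_rw [this]
    rw [integral_const_mul, integral_sq_gauss, mul_one]
  · simp only [mul_one]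
    rw [integral_const_mul, integral_id_gaussianReal, mul_zero]
  · simp only [one_mul]
    rw [integral_const_mul, integral_id_gaussianReal, mul_zero]
  · simp

lemma prod_shift_eq (σ : Equiv.Perm (Fin N)) (ξ : PairIdx N → ℝ) :
    ∏ j, (√t • (1 : Matrix (Fin N) (Fin N) ℝ) + sampleY A ξ) (σ j) j =
      (∏ i, if σ i = i then √t else 1) * ∏ p, pairFactor A σ p (ξ p) := by
  set M := √t • (1 : Matrix (Fin N) (Fin N) ℝ) + sampleY A ξ with hM
  have h1 : ∏ j, M (σ j) j = ∏ i, ∏ j, if σ j = i then M i j else 1 := by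
    rw [Finset.prod_comm]
    simp
  rw [h1, prod_pairs]
  congr 1
  · refine Finset.prod_congr rfl fun i _ => ?_
    simp [hM, sampleY_diag]
  · refine Finset.prod_congr rfl fun p _ => ?_
    have h2 : M p.1.1 p.1.2 = A p.1.1 p.1.2 * ξ p := by
      simp [hM, p.2.ne, sampleY_of_lt ξ p.2]
    have h3 : M p.1.2 p.1.1 = A p.1.2 p.1.1 * ξ p := by
      simp [hM, p.2.ne', sampleY_of_gt ξ p.2]
    simp only [pairFactor, h2, h3]

lemma det_shift_eq (ξ : PairIdx N → ℝ) :
    (√t • (1 : Matrix (Fin N) (Fin N) ℝ) + sampleY A ξ).det =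
      ∑ σ : Equiv.Perm (Fin N), ((Equiv.Perm.sign σ : ℤ) : ℝ) *
        ((∏ i, if σ i = i then √t else 1) * ∏ p, pairFactor A σ p (ξ p)) := by
  rw [Matrix.det_apply']
  exact Finset.sum_congr rfl fun σ _ => by rw [prod_shift_eq]

lemma integrable_term (σ : Equiv.Perm (Fin N)) :
    Integrable (fun ξ : PairIdx N → ℝ => ((Equiv.Perm.sign σ : ℤ) : ℝ) *
        ((∏ i, if σ i = i then √t else 1) * ∏ p, pairFactor A σ p (ξ p))) (gaussPi N) :=
  ((Integrable.fintype_prod fun p => pairFactor_integrable σ p).const_mul _).const_mul _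

lemma integrable_det (A : Matrix (Fin N) (Fin N) ℝ) (t : ℝ) :
    Integrable (fun ξ => (√t • (1 : Matrix (Fin N) (Fin N) ℝ) + sampleY A ξ).det)
      (gaussPi N) := by
  simp_rw [det_shift_eq]
  exact integrable_finsetSum _ fun σ _ => integrable_term σ

lemma integral_det_eq_sum (hA : Aᵀ = -A) :
    ∫ ξ, (√t • (1 : Matrix (Fin N) (Fin N) ℝ) + sampleY A ξ).det ∂gaussPi N =
      ∑ σ : Equiv.Perm (Fin N), ((Equiv.Perm.sign σ : ℤ) : ℝ) *
        ((∏ i, if σ i = i then √t else 1) * ∏ p : PairIdx N,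
          if σ p.1.2 = p.1.1 then (if σ p.1.1 = p.1.2 then - A p.1.1 p.1.2 ^ 2 else 0)
            else (if σ p.1.1 = p.1.2 then 0 else 1)) := by
  simp_rw [det_shift_eq]
  rw [integral_finsetSum _ fun σ _ => integrable_term σ]
  refine Finset.sum_congr rfl fun σ _ => ?_
  rw [integral_const_mul, integral_const_mul, gaussPi, integral_fintype_prod_eq_prod]
  simp_rw [pairFactor_integral hA]

/-- The matching formed by the transposed pairs of an involution. -/
def matchingOf (σ : Equiv.Perm (Fin N)) : Finset (Fin N × Fin N) :=
  Finset.univ.filter fun p => p.1 < p.2 ∧ σ p.1 = p.2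

/-- Set-of-pairs encoding of a matching, as in the definition of `phiW`. -/
def IsMatchingSet (M : Finset (Fin N × Fin N)) : Prop :=
  (∀ p ∈ M, p.1 < p.2) ∧
    ∀ p ∈ M, ∀ q ∈ M, p ≠ q → p.1 ≠ q.1 ∧ p.1 ≠ q.2 ∧ p.2 ≠ q.1 ∧ p.2 ≠ q.2

instance : DecidablePred (IsMatchingSet (N := N)) := fun M => by
  unfold IsMatchingSet; infer_instance

lemma mem_matchingOf {σ : Equiv.Perm (Fin N)} {p : Fin N × Fin N} :
    p ∈ matchingOf σ ↔ p.1 < p.2 ∧ σ p.1 = p.2 := by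
  simp [matchingOf]

lemma isMatchingSet_matchingOf {σ : Equiv.Perm (Fin N)} (hσ : ∀ i, σ (σ i) = i) :
    IsMatchingSet (matchingOf σ) := by
  refine ⟨fun p hp => (mem_matchingOf.1 hp).1, ?_⟩
  rintro ⟨i, j⟩ hp ⟨k, l⟩ hq hne
  obtain ⟨h1, h2⟩ := mem_matchingOf.1 hp
  obtain ⟨h3, h4⟩ := mem_matchingOf.1 hq
  simp only at h1 h2 h3 h4 ⊢
  refine ⟨?_, ?_, ?_, ?_⟩
  · rintro rfl; exact hne (by rw [← h2, ← h4])
  · rintro rfl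
    have := hσ k
    rw [h4, h2] at this
    subst this
    exact absurd h1 h3.not_gt
  · rintro rfl
    have := hσ i
    rw [h2, h4] at this
    subst this
    exact absurd h1 h3.not_gt
  · rintro rfl
    exact hne (by rw [σ.injective (h2.trans h4.symm)])

lemma matchingOf_injective {σ τ : Equiv.Perm (Fin N)} (hσ : ∀ i, σ (σ i) = i)
    (hτ : ∀ i, τ (τ i) = i) (h : matchingOf σ = matchingOf τ) : σ = τ := by
  have key : ∀ {σ τ : Equiv.Perm (Fin N)}, (∀ i, σ (σ i) = i) → (∀ i, τ (τ i) = i) →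
      matchingOf σ = matchingOf τ → ∀ i, σ i ≠ i → τ i = σ i := by
    intro σ τ hσ hτ h i hi
    rcases lt_or_gt_of_ne hi with h1 | h1
    · have : (σ i, i) ∈ matchingOf τ := h ▸ mem_matchingOf.2 ⟨h1, hσ i⟩
      have h2 : τ (σ i) = i := (mem_matchingOf.1 this).2
      rw [← hτ (σ i), h2]
    · have : (i, σ i) ∈ matchingOf τ := h ▸ mem_matchingOf.2 ⟨h1, rfl⟩
      exact (mem_matchingOf.1 this).2
  ext1 i
  by_cases h1 : σ i = i
  · by_cases h2 : τ i = i
    · rw [h1, h2]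
    · exact key hτ hσ h.symm i h2
  · exact (key hσ hτ h i h1).symm

lemma exists_matchingOf_eq {M : Finset (Fin N × Fin N)} (hM : IsMatchingSet M) :
    ∃ σ : Equiv.Perm (Fin N), (∀ i, σ (σ i) = i) ∧ matchingOf σ = M := by
  obtain ⟨h1, h2⟩ := hM
  -- Graph of the involution attached to `M`.
  let R : Fin N → Fin N → Prop := fun i j =>
    (i, j) ∈ M ∨ (j, i) ∈ M ∨ (i = j ∧ ∀ k, (i, k) ∉ M ∧ (k, i) ∉ M)
  have hsymm : ∀ i j, R i j → R j i := by
    rintro i j (h | h | ⟨rfl, h⟩)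
    · exact Or.inr (Or.inl h)
    · exact Or.inl h
    · exact Or.inr (Or.inr ⟨rfl, h⟩)
  have huniq : ∀ i j k, R i j → R i k → j = k := by
    intro i j k hj hk
    by_contra hne
    rcases hj with hj | hj | ⟨rfl, hj⟩
    · rcases hk with hk | hk | ⟨rfl, hk⟩
      · exact (h2 _ hj _ hk (by simpa using hne)).1 rfl
      · by_cases e : (i, j) = (k, i)
        · rw [Prod.mk.injEq] at e
          exact hne (e.2.trans e.1)
        · exact (h2 _ hj _ hk e).2.1 rfl
      · exact (hk j).1 hj
    · rcases hk with hk | hk | ⟨rfl, hk⟩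
      · by_cases e : (j, i) = (i, k)
        · rw [Prod.mk.injEq] at e
          exact hne (e.1.trans e.2)
        · exact (h2 _ hj _ hk e).2.2.1 rfl
      · exact (h2 _ hj _ hk (by simpa using hne)).2.2.2 rfl
      · exact (hk j).2 hj
    · rcases hk with hk | hk | ⟨rfl, hk⟩
      · exact (hj k).1 hk
      · exact (hj k).2 hk
      · exact hne rfl
  have hex : ∀ i, ∃ j, R i j := by
    intro i
    by_cases h : ∃ j, (i, j) ∈ M ∨ (j, i) ∈ M
    · obtain ⟨j, hj | hj⟩ := h
      · exact ⟨j, Or.inl hj⟩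
      · exact ⟨j, Or.inr (Or.inl hj)⟩
    · push Not at h
      exact ⟨i, Or.inr (Or.inr ⟨rfl, h⟩)⟩
  choose g hg using hex
  have hinv : Function.Involutive g := fun i => huniq (g i) _ _ (hg (g i)) (hsymm _ _ (hg i))
  refine ⟨hinv.toPerm g, fun i => hinv i, ?_⟩
  ext ⟨i, j⟩
  rw [mem_matchingOf]
  simp only [Function.Involutive.coe_toPerm]
  constructor
  · rintro ⟨hlt, rfl⟩
    rcases hg i with h | h | ⟨h, -⟩
    · exact h
    · exact absurd (h1 _ h) hlt.not_gt
    · exact absurd h hlt.ne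
  · intro h
    exact ⟨h1 _ h, huniq i _ _ (hg i) (Or.inl h)⟩

lemma involution_iff {σ : Equiv.Perm (Fin N)} (hσ : ∀ i, σ (σ i) = i) (i j : Fin N) :
    σ j = i ↔ σ i = j :=
  ⟨fun h => h ▸ hσ j, fun h => h ▸ hσ i⟩

lemma prod_matchingOf {R : Type*} [CommMonoid R] (σ : Equiv.Perm (Fin N))
    (f : Fin N × Fin N → R) :
    ∏ p ∈ matchingOf σ, f p = ∏ p : PairIdx N, if σ p.1.1 = p.1.2 then f p.1 else 1 := by
  rw [matchingOf, ← Finset.filter_filter, Finset.prod_filter,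
    Finset.prod_subtype (p := fun p : Fin N × Fin N => p.1 < p.2)]
  simp

lemma card_fixed_add {σ : Equiv.Perm (Fin N)} (hσ : ∀ i, σ (σ i) = i) :
    (Finset.univ.filter fun i => σ i = i).card + 2 * (matchingOf σ).card = N := by
  have h := sum_pairs (fun i j : Fin N => if σ j = i then 1 else 0)
  rw [Finset.sum_comm] at h
  simp only [Finset.sum_ite_eq, Finset.mem_univ, if_true, Finset.sum_const, Finset.card_univ,
    Fintype.card_fin, smul_eq_mul, mul_one] at h
  have h2 : (matchingOf σ).card = ∑ p : PairIdx N, if σ p.1.1 = p.1.2 then 1 else 0 := by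
    have := prod_matchingOf (R := Multiplicative ℕ) σ (fun _ => Multiplicative.ofAdd 1)
    rw [Finset.card_eq_sum_ones]
    have := congrArg Multiplicative.toAdd this
    simp only [toAdd_prod, toAdd_ofAdd] at this
    rw [this]
    refine Finset.sum_congr rfl fun p _ => ?_
    split_ifs <;> simp
  rw [Finset.card_filter, h2, Finset.mul_sum]
  refine Eq.trans ?_ h.symm
  congr 1
  refine Finset.sum_congr rfl fun p _ => ?_
  simp only [involution_iff hσ p.1.1 p.1.2]
  ring

/-- An involution contributes the weight of its matching: the signs `(-1) ^ k` from the
permutation and from skew-symmetry cancel. -/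
lemma term_involution {σ : Equiv.Perm (Fin N)} (hσ : ∀ i, σ (σ i) = i) :
    ((Equiv.Perm.sign σ : ℤ) : ℝ) *
        ((∏ i, if σ i = i then √t else 1) * ∏ p : PairIdx N,
          if σ p.1.2 = p.1.1 then (if σ p.1.1 = p.1.2 then - A p.1.1 p.1.2 ^ 2 else 0)
            else (if σ p.1.1 = p.1.2 then 0 else 1)) =
      √t ^ (N - 2 * (matchingOf σ).card) * ∏ p ∈ matchingOf σ, A p.1 p.2 ^ 2 := by
  have hc := card_fixed_add hσ
  have hfix : Fintype.card (Function.fixedPoints σ) =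
      (Finset.univ.filter fun i => σ i = i).card := by
    rw [← Set.toFinset_card]
    congr 1
    ext i
    simp [Function.IsFixedPt]
  have hsign : Equiv.Perm.sign σ = (-1) ^ (matchingOf σ).card := by
    rw [Equiv.Perm.sign_of_pow_two_eq_one (σ := σ) (by ext1 i; simp [sq, hσ]), hfix,
      Fintype.card_fin]
    congr 1
    omega
  have h1 : (∏ i, if σ i = i then √t else 1) = √t ^ (N - 2 * (matchingOf σ).card) := by
    rw [← Finset.prod_filter, Finset.prod_const]
    congr 1
    omega
  have h2 : (∏ p : PairIdx N,
          if σ p.1.2 = p.1.1 then (if σ p.1.1 = p.1.2 then - A p.1.1 p.1.2 ^ 2 else 0)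
            else (if σ p.1.1 = p.1.2 then 0 else 1)) =
      ∏ p ∈ matchingOf σ, -(A p.1 p.2 ^ 2) := by
    rw [prod_matchingOf]
    refine Finset.prod_congr rfl fun p _ => ?_
    simp only [involution_iff hσ p.1.1 p.1.2]
    split_ifs <;> rfl
  rw [h1, h2, hsign, Finset.prod_neg]
  push_cast
  have : ((-1 : ℝ) ^ (matchingOf σ).card) * (-1) ^ (matchingOf σ).card = 1 := by
    rw [← mul_pow]; simp
  linear_combination (√t ^ (N - 2 * (matchingOf σ).card) *
    ∏ p ∈ matchingOf σ, A p.1 p.2 ^ 2) * this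

/-- If `σ (σ i) ≠ i`, the variable of the pair `{i, σ i}` occurs exactly once, so its factor has
mean zero. -/
lemma term_not_involution {σ : Equiv.Perm (Fin N)} (hσ : ¬ ∀ i, σ (σ i) = i) :
    (∏ p : PairIdx N,
          if σ p.1.2 = p.1.1 then (if σ p.1.1 = p.1.2 then - A p.1.1 p.1.2 ^ 2 else 0)
            else (if σ p.1.1 = p.1.2 then 0 else 1)) = 0 := by
  push Not at hσ
  obtain ⟨i, hi⟩ := hσ
  have hne : i ≠ σ i := fun h => hi (by rw [← h, ← h])
  rcases lt_or_gt_of_ne hne with h | h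
  · exact Finset.prod_eq_zero (Finset.mem_univ ⟨(i, σ i), h⟩) (by simp [hi])
  · exact Finset.prod_eq_zero (Finset.mem_univ ⟨(σ i, i), h⟩) (by simp [hi])

lemma card_le_of_isMatchingSet {M : Finset (Fin N × Fin N)} (hM : IsMatchingSet M) :
    M.card ≤ N / 2 := by
  obtain ⟨σ, hσ, rfl⟩ := exists_matchingOf_eq hM
  have := card_fixed_add hσ
  omega

lemma PhiFull_eq_sum (ht : 0 < t) :
    PhiFull A t = ∑ M ∈ Finset.univ.filter (IsMatchingSet (N := N)),
      √t ^ (N - 2 * M.card) * ∏ p ∈ M, A p.1 p.2 ^ 2 := by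
  rw [← Finset.sum_fiberwise_of_maps_to (t := Finset.range (N / 2 + 1)) (g := Finset.card)
    (fun M hM => by
      have := card_le_of_isMatchingSet (Finset.mem_filter.1 hM).2
      exact Finset.mem_range.2 (by omega))]
  rw [PhiFull, PhiW, Finset.mul_sum]
  refine Finset.sum_congr rfl fun k hk => ?_
  have hk' : k ≤ N / 2 := by have := Finset.mem_range.1 hk; omega
  have hpow : √t ^ (N - 2 * k) = (if Even N then 1 else √t) * t ^ (N / 2 - k) := by
    split_ifs with he
    · have : N - 2 * k = 2 * (N / 2 - k) := by
        obtain ⟨m, rfl⟩ := he; omega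
      rw [this, pow_mul, Real.sq_sqrt ht.le, one_mul]
    · have : N - 2 * k = 2 * (N / 2 - k) + 1 := by
        rw [Nat.not_even_iff_odd] at he
        obtain ⟨m, rfl⟩ := he; omega
      rw [this, pow_succ, pow_mul, Real.sq_sqrt ht.le, mul_comm]
  rw [phiW, Finset.filter_filter, Finset.sum_mul, Finset.mul_sum]
  refine Finset.sum_congr rfl fun M hM => ?_
  rw [(Finset.mem_filter.1 hM).2.2, hpow]
  ring

/-- The expected determinant is the matching polynomial. -/
lemma integral_det (hA : Aᵀ = -A) (ht : 0 < t) :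
    ∫ ξ, (√t • (1 : Matrix (Fin N) (Fin N) ℝ) + sampleY A ξ).det ∂gaussPi N = PhiFull A t := by
  rw [integral_det_eq_sum hA, PhiFull_eq_sum ht,
    ← Finset.sum_filter_add_sum_filter_not _ (fun σ : Equiv.Perm (Fin N) => ∀ i, σ (σ i) = i),
    Finset.sum_eq_zero (s := Finset.univ.filter
      (fun σ : Equiv.Perm (Fin N) => ¬ ∀ i, σ (σ i) = i)), add_zero]
  · refine Finset.sum_bij (fun σ _ => matchingOf σ) ?_ ?_ ?_ ?_
    · intro σ hσ
      exact Finset.mem_filter.2 ⟨Finset.mem_univ _,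
        isMatchingSet_matchingOf (Finset.mem_filter.1 hσ).2⟩
    · intro σ hσ τ hτ h
      exact matchingOf_injective (Finset.mem_filter.1 hσ).2 (Finset.mem_filter.1 hτ).2 h
    · intro M hM
      obtain ⟨σ, h1, h2⟩ := exists_matchingOf_eq (Finset.mem_filter.1 hM).2
      exact ⟨σ, Finset.mem_filter.2 ⟨Finset.mem_univ _, h1⟩, h2⟩
    · intro σ hσ
      exact term_involution (Finset.mem_filter.1 hσ).2
  · intro σ hσ
    rw [term_not_involution (Finset.mem_filter.1 hσ).2, mul_zero, mul_zero]

end Expectation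

/-! ### Concentration of the log-determinant -/

section Concentration

lemma integral_log_le_log_integral {Ω : Type*} [MeasurableSpace Ω] {μ : Measure Ω}
    [IsProbabilityMeasure μ] {D : Ω → ℝ} (hD : ∀ x, 0 < D x) (hi : Integrable D μ)
    (hl : Integrable (fun x => Real.log (D x)) μ) (hp : 0 < ∫ x, D x ∂μ) :
    ∫ x, Real.log (D x) ∂μ ≤ Real.log (∫ x, D x ∂μ) := by
  set c := ∫ x, D x ∂μ with hc
  have h : ∀ x, Real.log (D x) ≤ Real.log c + (D x / c - 1) := by
    intro x
    have := Real.log_le_sub_one_of_pos (div_pos (hD x) hp)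
    rw [Real.log_div (hD x).ne' hp.ne'] at this
    linarith
  have hs : Integrable (fun x => D x / c - 1) μ := (hi.div_const c).sub (integrable_const _)
  calc ∫ x, Real.log (D x) ∂μ ≤ ∫ x, (Real.log c + (D x / c - 1)) ∂μ :=
        integral_mono hl ((integrable_const _).add hs) h
    _ = Real.log c := by
        rw [integral_add (integrable_const _) hs,
          integral_sub (hi.div_const c) (integrable_const _), integral_div, ← hc]
        simp [hp.ne']

variable {N : ℕ} {A : Matrix (Fin N) (Fin N) ℝ} {a t : ℝ}

lemma continuous_det_shift (A : Matrix (Fin N) (Fin N) ℝ) (t : ℝ) :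
    Continuous fun ξ => (√t • (1 : Matrix (Fin N) (Fin N) ℝ) + sampleY A ξ).det := by
  refine Continuous.matrix_det (continuous_const.add (continuous_matrix fun i j => ?_))
  simp only [sampleY, Matrix.of_apply]
  split_ifs <;> fun_prop

instance : IsProbabilityMeasure (gaussPi N) := by
  unfold gaussPi; infer_instance

/-- Both estimates, with the error term `a² N / (2t)`. The upper bound combines
`E D · E D⁻¹ ≤ exp (a² N / (2t))` for `D = det (√t I + Y_A)` with Jensen's inequality
for `log D⁻¹`. -/
lemma log_bounds (hA : Aᵀ = -A) (ha : ∀ i j, |A i j| ≤ a) (ht : 0 < t) :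
    logPhiTilde t A ≤ Real.log (PhiFull A t) ∧
      Real.log (PhiFull A t) ≤ logPhiTilde t A + a ^ 2 * N / (2 * t) := by
  set D : (PairIdx N → ℝ) → ℝ := fun ξ =>
    (√t • (1 : Matrix (Fin N) (Fin N) ℝ) + sampleY A ξ).det with hDdef
  set x := a ^ 2 * N / (2 * t) with hx
  have hx0 : 0 ≤ x := by positivity
  have hD : ∀ ξ, 0 < D ξ := fun ξ => det_shift_pos (sampleY_transpose hA ξ) ht
  have hDc : Continuous D := continuous_det_shift A t
  have hDi : Integrable D (gaussPi N) := integrable_det A t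
  have hPhi : ∫ ξ, D ξ ∂gaussPi N = PhiFull A t := integral_det hA ht
  have posint : ∀ E : (PairIdx N → ℝ) → ℝ, (∀ ξ, 0 < E ξ) → Integrable E (gaussPi N) →
      0 < ∫ ξ, E ξ ∂gaussPi N := by
    intro E hE hEi
    rw [integral_pos_iff_support_of_nonneg (fun ξ => (hE ξ).le) hEi]
    have : Function.support E = Set.univ := by
      ext ξ; simp [(hE ξ).ne']
    simp [this]
  have hPhi0 := posint D hD hDi
  have hDim : Measurable fun ξ => (D ξ)⁻¹ := hDc.measurable.inv
  have key := gaussian_tau (ι := PairIdx N) (F := fun ξ => ENNReal.ofReal (D ξ))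
    (G := fun ξ => ENNReal.ofReal (D ξ)⁻¹) hDc.measurable.ennreal_ofReal hDim.ennreal_ofReal
    (Real.exp x) (Real.exp_pos _).le (fun ξ η => by
      rw [← ENNReal.ofReal_mul (hD ξ).le]
      refine ENNReal.ofReal_le_ofReal ?_
      rw [← Real.exp_add, ← Real.exp_log (hD ξ), ← Real.exp_log (hD η), ← Real.exp_neg,
        ← Real.exp_add, Real.exp_le_exp, ← sub_eq_add_neg]
      refine (le_abs_self _).trans ((log_det_lipschitz hA ha ht ξ η).trans ?_)
      have hS : 0 ≤ ∑ p, (ξ p - η p) ^ 2 := Finset.sum_nonneg fun p _ => sq_nonneg _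
      set S := ∑ p, (ξ p - η p) ^ 2
      rw [← hx]
      refine Real.sqrt_le_iff.2 ⟨by positivity, ?_⟩
      nlinarith [sq_nonneg (x - S / 4)])
  change (∫⁻ ξ, ENNReal.ofReal (D ξ) ∂gaussPi N) *
    (∫⁻ ξ, ENNReal.ofReal (D ξ)⁻¹ ∂gaussPi N) ≤ _ at key
  rw [← ofReal_integral_eq_lintegral_ofReal hDi (ae_of_all _ fun ξ => (hD ξ).le)] at key
  have hfin : ∫⁻ ξ, ENNReal.ofReal (D ξ)⁻¹ ∂gaussPi N ≠ ⊤ := by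
    intro e
    rw [e, ENNReal.mul_top (by simpa using hPhi0)] at key
    simp at key
  have hDinv : Integrable (fun ξ => (D ξ)⁻¹) (gaussPi N) := by
    refine ⟨hDim.aestronglyMeasurable, ?_⟩
    rw [hasFiniteIntegral_iff_ofReal (ae_of_all _ fun ξ => (inv_pos.2 (hD ξ)).le)]
    exact lt_top_iff_ne_top.2 hfin
  rw [← ofReal_integral_eq_lintegral_ofReal hDinv
    (ae_of_all _ fun ξ => (inv_pos.2 (hD ξ)).le), ← ENNReal.ofReal_mul hPhi0.le,
    ENNReal.ofReal_le_ofReal_iff (Real.exp_pos _).le] at key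
  have hinv0 := posint (fun ξ => (D ξ)⁻¹) (fun ξ => inv_pos.2 (hD ξ)) hDinv
  have hlog : Integrable (fun ξ => Real.log (D ξ)) (gaussPi N) := by
    refine (hDi.add hDinv).mono' (hDc.measurable.log.aestronglyMeasurable)
      (ae_of_all _ fun ξ => ?_)
    rw [Real.norm_eq_abs, abs_le, Pi.add_apply]
    have h1 := Real.log_le_sub_one_of_pos (hD ξ)
    have h2 := Real.log_le_sub_one_of_pos (inv_pos.2 (hD ξ))
    rw [Real.log_inv] at h2
    have h3 := hD ξ
    have h4 := inv_pos.2 (hD ξ)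
    constructor <;> linarith
  have hL : logPhiTilde t A = ∫ ξ, Real.log (D ξ) ∂gaussPi N := rfl
  rw [hL, ← hPhi]
  refine ⟨integral_log_le_log_integral hD hDi hlog hPhi0, ?_⟩
  have h1 := integral_log_le_log_integral (fun ξ => inv_pos.2 (hD ξ)) hDinv
    (by simp only [Real.log_inv]; exact hlog.neg) hinv0
  simp only [Real.log_inv] at h1
  rw [integral_neg] at h1
  have h2 := Real.log_le_log (mul_pos hPhi0 hinv0) key
  rw [Real.log_exp, Real.log_mul hPhi0.ne' hinv0.ne'] at h2
  linarith

end Concentration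

lemma exponent_le_log {N : ℕ} {a t : ℝ} (ha : 0 ≤ a) (ht : 0 < t) :
    a ^ 2 * N / (2 * t) ≤ Real.log (1 +
      Real.sqrt (8 * N) * a * Real.exp (a ^ 2 * N / (2 * t)) / Real.sqrt (Real.pi * t)) := by
  set x := a ^ 2 * N / (2 * t) with hx
  have hx0 : 0 ≤ x := by positivity
  set c := √(8 * N) * a / √(Real.pi * t) with hc
  have hc0 : 0 ≤ c := by positivity
  have e : Real.sqrt (8 * N) * a * Real.exp x / Real.sqrt (Real.pi * t) = c * Real.exp x := by
    rw [hc]; ring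
  have hc2 : 4 * x ≤ c ^ 2 := by
    have : c ^ 2 = 16 / Real.pi * x := by
      rw [hc, hx, div_pow, mul_pow, Real.sq_sqrt (by positivity), Real.sq_sqrt (by positivity)]
      field_simp
      ring
    rw [this]
    have h4 : 4 ≤ 16 / Real.pi := by
      rw [le_div_iff₀ Real.pi_pos]
      linarith [Real.pi_le_four]
    exact mul_le_mul_of_nonneg_right h4 hx0
  rw [e, Real.le_log_iff_exp_le (by positivity)]
  rcases le_or_gt 1 c with h | h
  · nlinarith [Real.exp_pos x]
  · -- `exp x - 1 ≤ x exp x`, and `x ≤ c² / 4 ≤ c` in this range.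
    have hxc : x ≤ c := by nlinarith
    have h1 := Real.add_one_le_exp (-x)
    have h2 : Real.exp (-x) * Real.exp x = 1 := by rw [← Real.exp_add]; simp
    nlinarith [Real.exp_pos x]

/-- Corollary of the concentration estimate:
`(1/N) log Φ̃(t,A) ≤ (1/N) log Φ(t,A)
  ≤ (1/N) log Φ̃(t,A) + (1/N) log(1 + √(8N) a e^{a²N/(2t)}/√(πt))`,
where for `N` odd `Φ(t,A)` is replaced by `√t·Φ(t,A)`. -/
theorem log_matching_polynomial_bounds
    {N : ℕ} (A : Matrix (Fin N) (Fin N) ℝ) (hA : Aᵀ = -A) (hA0 : A ≠ 0)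
    (a : ℝ) (ha : ∀ i j, |A i j| ≤ a) (ha' : ∃ i j, |A i j| = a)
    (t : ℝ) (ht : 0 < t) :
    (1 / (N : ℝ)) * logPhiTilde t A ≤ (1 / (N : ℝ)) * Real.log (PhiFull A t) ∧
      (1 / (N : ℝ)) * Real.log (PhiFull A t) ≤
        (1 / (N : ℝ)) * logPhiTilde t A +
          (1 / (N : ℝ)) * Real.log (1 +
            Real.sqrt (8 * N) * a * Real.exp (a ^ 2 * N / (2 * t)) /
              Real.sqrt (Real.pi * t)) := by
  have ha0 : 0 ≤ a := by
    obtain ⟨i, j, h⟩ := ha'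
    exact h ▸ abs_nonneg _
  obtain ⟨h1, h2⟩ := log_bounds hA ha ht
  have h3 := exponent_le_log (N := N) ha0 ht
  have hN : 0 ≤ 1 / (N : ℝ) := by positivity
  refine ⟨mul_le_mul_of_nonneg_left h1 hN, ?_⟩
  rw [← mul_add]
  exact mul_le_mul_of_nonneg_left (by linarith) hN
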